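/- (LDG theorem.) Suppose ρ and ψ are twice continuously differentiable in their parameters with ρ > 0, and let ς ↦ (φ(ς), ϕ(ς)) be a twice differentiable curve. Write r(ς,ν) := ρ(φ(ς),ν) and p(ς,ν) := ψ(ϕ(ς),ν), and let ∇_ξ denote the gradient in the full parameter ξ = (φ,ϕ) ∈ ℝ^N (so ∇_ξ ln ρ has vanishing ϕ-components and ∇_ξ ψ has vanishing φ-components). Then the geodesic system of the Fisher metric holds at ς if and only if the following two equations hold in ℝ^N: Σ_{ν∈B} (2·r²/γ0(ν))·( ∂²(ln r)/∂ς² + (∂(ln r)/∂ς)² − (∂p/∂ς)² )·∇_ξ ln ρ(ν) = 0 and Σ_{ν∈B} (2·r²/γ0(ν))·( ∂²p/∂ς² + 2·(∂(ln r)/∂ς)·(∂p/∂ς) )·∇_ξ ψ(ν) = 0. -/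

import Mathlib

noncomputable section

/-- Partial derivative in the `i`-th coordinate direction. -/
def dP {n : ℕ} {E : Type*} [NormedAddCommGroup E] [NormedSpace ℝ E]
    (f : (Fin n → ℝ) → E) (x : Fin n → ℝ) (i : Fin n) : E :=
  fderiv ℝ f x (Pi.single i 1)

variable {P Q : ℕ} {B : Type*} [Fintype B]

/-- ∂ρ/∂φ^u. -/
def Drho (ρ : (Fin P → ℝ) → B → ℝ) (φ : Fin P → ℝ) (ν : B) (u : Fin P) : ℝ :=
  dP (fun φ' => ρ φ' ν) φ u

/-- ∂²ρ/∂φ^u∂φ^v. -/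
def D2rho (ρ : (Fin P → ℝ) → B → ℝ) (φ : Fin P → ℝ) (ν : B) (u v : Fin P) : ℝ :=
  dP (fun φ' => Drho ρ φ' ν v) φ u

/-- ∂ψ/∂ϕ^q. -/
def Dpsi (ψ : (Fin Q → ℝ) → B → ℝ) (ϕ : Fin Q → ℝ) (ν : B) (q : Fin Q) : ℝ :=
  dP (fun ϕ' => ψ ϕ' ν) ϕ q

/-- ∂²ψ/∂ϕ^q∂ϕ^r. -/
def D2psi (ψ : (Fin Q → ℝ) → B → ℝ) (ϕ : Fin Q → ℝ) (ν : B) (q r : Fin Q) : ℝ :=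
  dP (fun ϕ' => Dpsi ψ ϕ' ν r) ϕ q

/-- Magnitude block of the Fisher matrix. -/
def gRho (γ0 : B → ℝ) (ρ : (Fin P → ℝ) → B → ℝ) (φ : Fin P → ℝ) (u v : Fin P) : ℝ :=
  ∑ ν : B, (2 / γ0 ν) * Drho ρ φ ν u * Drho ρ φ ν v

/-- Phase block of the Fisher matrix. -/
def gPsi (γ0 : B → ℝ) (ρ : (Fin P → ℝ) → B → ℝ) (ψ : (Fin Q → ℝ) → B → ℝ)
    (φ : Fin P → ℝ) (ϕ : Fin Q → ℝ) (q r : Fin Q) : ℝ :=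
  ∑ ν : B, (2 / γ0 ν) * (ρ φ ν)^2 * Dpsi ψ ϕ ν q * Dpsi ψ ϕ ν r

/-- Christoffel symbol Γ_{u'v',u}. -/
def Γrr (γ0 : B → ℝ) (ρ : (Fin P → ℝ) → B → ℝ) (φ : Fin P → ℝ) (u' v' u : Fin P) : ℝ :=
  ∑ ν : B, (2 / γ0 ν) * Drho ρ φ ν u * D2rho ρ φ ν u' v'

/-- Christoffel symbol Γ_{q'r',u}. -/
def Γppu (γ0 : B → ℝ) (ρ : (Fin P → ℝ) → B → ℝ) (ψ : (Fin Q → ℝ) → B → ℝ)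
    (φ : Fin P → ℝ) (ϕ : Fin Q → ℝ) (q' r' : Fin Q) (u : Fin P) : ℝ :=
  -∑ ν : B, (2 / γ0 ν) * ρ φ ν * Drho ρ φ ν u * Dpsi ψ ϕ ν q' * Dpsi ψ ϕ ν r'

/-- Christoffel symbol Γ_{q'r',q}. -/
def Γppq (γ0 : B → ℝ) (ρ : (Fin P → ℝ) → B → ℝ) (ψ : (Fin Q → ℝ) → B → ℝ)
    (φ : Fin P → ℝ) (ϕ : Fin Q → ℝ) (q' r' q : Fin Q) : ℝ :=
  ∑ ν : B, (2 / γ0 ν) * (ρ φ ν)^2 * Dpsi ψ ϕ ν q * D2psi ψ ϕ ν q' r'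

/-- Christoffel symbol Γ_{q'u,q} = Γ_{uq',q}. -/
def Γpuq (γ0 : B → ℝ) (ρ : (Fin P → ℝ) → B → ℝ) (ψ : (Fin Q → ℝ) → B → ℝ)
    (φ : Fin P → ℝ) (ϕ : Fin Q → ℝ) (q' : Fin Q) (u : Fin P) (q : Fin Q) : ℝ :=
  ∑ ν : B, (2 / γ0 ν) * ρ φ ν * Drho ρ φ ν u * Dpsi ψ ϕ ν q * Dpsi ψ ϕ ν q'

/-- The geodesic system of the Fisher metric along the curve `ς ↦ (φc ς, ϕc ς)`, at `ς`. -/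
def GeodesicSystem (γ0 : B → ℝ) (ρ : (Fin P → ℝ) → B → ℝ) (ψ : (Fin Q → ℝ) → B → ℝ)
    (φc : ℝ → Fin P → ℝ) (ϕc : ℝ → Fin Q → ℝ) (ς : ℝ) : Prop :=
  (∀ u : Fin P,
    (∑ v, gRho γ0 ρ (φc ς) u v * deriv (deriv (fun t => φc t v)) ς) +
    (∑ u', ∑ v', Γrr γ0 ρ (φc ς) u' v' u *
      deriv (fun t => φc t u') ς * deriv (fun t => φc t v') ς) +
    (∑ q', ∑ r', Γppu γ0 ρ ψ (φc ς) (ϕc ς) q' r' u *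
      deriv (fun t => ϕc t q') ς * deriv (fun t => ϕc t r') ς) = 0) ∧
  (∀ q : Fin Q,
    (∑ r, gPsi γ0 ρ ψ (φc ς) (ϕc ς) q r * deriv (deriv (fun t => ϕc t r)) ς) +
    (∑ q', ∑ r', Γppq γ0 ρ ψ (φc ς) (ϕc ς) q' r' q *
      deriv (fun t => ϕc t q') ς * deriv (fun t => ϕc t r') ς) +
    2 * (∑ q', ∑ u', Γpuq γ0 ρ ψ (φc ς) (ϕc ς) q' u' q *
      deriv (fun t => ϕc t q') ς * deriv (fun t => φc t u') ς) = 0)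

/-- Gradient of `ln ρ(·,ν)` in the full parameter `ξ = (φ,ϕ)`: its ϕ-components vanish. -/
def gradLnRho (ρ : (Fin P → ℝ) → B → ℝ) (φ : Fin P → ℝ) (ν : B) : Fin P ⊕ Fin Q → ℝ :=
  Sum.elim (fun u => dP (fun φ' => Real.log (ρ φ' ν)) φ u) (fun _ => 0)

/-- Gradient of `ψ(·,ν)` in the full parameter `ξ = (φ,ϕ)`: its φ-components vanish. -/
def gradPsi (ψ : (Fin Q → ℝ) → B → ℝ) (ϕ : Fin Q → ℝ) (ν : B) : Fin P ⊕ Fin Q → ℝ :=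
  Sum.elim (fun _ => 0) (fun q => Dpsi ψ ϕ ν q)

theorem aux_swap {α β ι : Type*} [Fintype α] [Fintype β] [Fintype ι] (F : α → β → ι → ℝ) :
    ∑ a, ∑ b, ∑ ν, F a b ν = ∑ ν, ∑ a, ∑ b, F a b ν := by
  rw [Finset.sum_comm (s := (Finset.univ : Finset ι))]
  exact Finset.sum_congr rfl fun a _ => Finset.sum_comm

theorem aux_chain {n : ℕ} (f : (Fin n → ℝ) → ℝ) (hf : Differentiable ℝ f)
    (c : ℝ → Fin n → ℝ) (hc : ∀ i, Differentiable ℝ (fun t => c t i)) (t : ℝ) :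
    HasDerivAt (fun t => f (c t)) (∑ i, dP f (c t) i * deriv (fun t => c t i) t) t := by
  have h1 : HasDerivAt c (fun i => deriv (fun t => c t i) t) t :=
    hasDerivAt_pi.2 fun i => (hc i t).hasDerivAt
  have h2 := (hf (c t)).hasFDerivAt.comp_hasDerivAt t h1
  refine HasDerivAt.congr_deriv h2 ?_
  symm
  conv_rhs => rw [pi_eq_sum_univ' (fun i => deriv (fun t => c t i) t)]
  rw [map_sum]
  refine Finset.sum_congr rfl fun i _ => ?_
  rw [map_smul, smul_eq_mul, mul_comm, dP]

theorem aux_dP_diff {n : ℕ} (f : (Fin n → ℝ) → ℝ) (hf : ContDiff ℝ 2 f) (i : Fin n) :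
    Differentiable ℝ (fun x => dP f x i) := by
  have h : ContDiff ℝ 1 (fderiv ℝ f) := hf.fderiv_right (by norm_num)
  have h' := h.differentiable (by norm_num)
  unfold dP
  fun_prop

theorem aux_chain2 {n : ℕ} (f : (Fin n → ℝ) → ℝ) (hf : ContDiff ℝ 2 f)
    (c : ℝ → Fin n → ℝ) (hc : ∀ i, Differentiable ℝ (fun t => c t i))
    (hc' : ∀ i, Differentiable ℝ (deriv (fun t => c t i))) (t : ℝ) :
    HasDerivAt (deriv (fun t => f (c t)))
      ((∑ i, dP f (c t) i * deriv (deriv (fun t => c t i)) t) +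
        ∑ i, ∑ j, dP (fun x => dP f x j) (c t) i * deriv (fun t => c t i) t
          * deriv (fun t => c t j) t) t := by
  have h0 : deriv (fun t => f (c t)) =
      fun t => ∑ i, dP f (c t) i * deriv (fun t => c t i) t := by
    funext t
    exact (aux_chain f (hf.differentiable (by norm_num)) c hc t).deriv
  rw [h0]
  have := HasDerivAt.fun_sum (u := Finset.univ) fun i _ =>
    (aux_chain _ (aux_dP_diff f hf i) c hc t).mul (hc' i t).hasDerivAt
  refine HasDerivAt.congr_deriv this ?_
  rw [Finset.sum_add_distrib, add_comm]
  congr 1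
  simp only [Finset.sum_mul]
  rw [Finset.sum_comm]

theorem aux_log (r : ℝ → ℝ) (hr : ∀ t, 0 < r t) (h1 : Differentiable ℝ r)
    (h2 : Differentiable ℝ (deriv r)) (t : ℝ) :
    deriv (fun t => Real.log (r t)) t = deriv r t / r t ∧
    deriv (deriv (fun t => Real.log (r t))) t =
      deriv (deriv r) t / r t - (deriv r t / r t) ^ 2 := by
  have h : deriv (fun t => Real.log (r t)) = fun t => deriv r t / r t := by
    funext t
    exact ((h1 t).hasDerivAt.log (hr t).ne').deriv
  refine ⟨by rw [h], ?_⟩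
  rw [h]
  have := ((h2 t).hasDerivAt.div (h1 t).hasDerivAt (hr t).ne').deriv
  refine Eq.trans this ?_
  have := (hr t).ne'
  field_simp

theorem aux_gradlog {n : ℕ} (f : (Fin n → ℝ) → ℝ) (hf : Differentiable ℝ f)
    (hp : ∀ x, 0 < f x) (x : Fin n → ℝ) (i : Fin n) :
    dP (fun x => Real.log (f x)) x i = dP f x i / f x := by
  unfold dP
  rw [((hf x).hasFDerivAt.log (hp x).ne').fderiv]
  simp [div_eq_inv_mul]

/-- LDG theorem: the geodesic system of the Fisher metric holds iff the two vector equations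
in ℝ^N combining log-magnitude and phase, with their full-parameter gradients, hold. -/
theorem stmt5 {P Q : ℕ} {B : Type*} [Fintype B] [Nonempty B]
    (γ0 : B → ℝ) (hγ0 : ∀ ν, 0 < γ0 ν)
    (ρ : (Fin P → ℝ) → B → ℝ) (ψ : (Fin Q → ℝ) → B → ℝ)
    (hρpos : ∀ φ ν, 0 < ρ φ ν)
    (hρ : ∀ ν, ContDiff ℝ 2 (fun φ => ρ φ ν))
    (hψ : ∀ ν, ContDiff ℝ 2 (fun ϕ => ψ ϕ ν))
    (φc : ℝ → Fin P → ℝ) (ϕc : ℝ → Fin Q → ℝ)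
    (hφc : ∀ v, Differentiable ℝ (fun ς => φc ς v))
    (hφc' : ∀ v, Differentiable ℝ (deriv (fun ς => φc ς v)))
    (hϕc : ∀ q, Differentiable ℝ (fun ς => ϕc ς q))
    (hϕc' : ∀ q, Differentiable ℝ (deriv (fun ς => ϕc ς q)))
    (ς : ℝ) :
    GeodesicSystem γ0 ρ ψ φc ϕc ς ↔
      ((∑ ν : B, ((2 * (ρ (φc ς) ν)^2 / γ0 ν) *
          (deriv (deriv (fun t => Real.log (ρ (φc t) ν))) ς +
            (deriv (fun t => Real.log (ρ (φc t) ν)) ς)^2 -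
            (deriv (fun t => ψ (ϕc t) ν) ς)^2)) •
          gradLnRho (Q := Q) ρ (φc ς) ν = (0 : Fin P ⊕ Fin Q → ℝ)) ∧
       (∑ ν : B, ((2 * (ρ (φc ς) ν)^2 / γ0 ν) *
          (deriv (deriv (fun t => ψ (ϕc t) ν)) ς +
            2 * deriv (fun t => Real.log (ρ (φc t) ν)) ς *
              deriv (fun t => ψ (ϕc t) ν) ς)) •
          gradPsi (P := P) ψ (ϕc ς) ν = (0 : Fin P ⊕ Fin Q → ℝ))) := by
  have hρd := fun ν => (hρ ν).differentiable (by norm_num)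
  have hψd := fun ν => (hψ ν).differentiable (by norm_num)
  have r1 := fun ν t => aux_chain _ (hρd ν) φc hφc t
  have r2 := fun ν t => aux_chain2 _ (hρ ν) φc hφc hφc' t
  have p1 := fun ν => (aux_chain _ (hψd ν) ϕc hϕc ς).deriv
  have p2 := fun ν => (aux_chain2 _ (hψ ν) ϕc hϕc hϕc' ς).deriv
  have hl := fun ν => aux_log (fun t => ρ (φc t) ν) (fun t => hρpos _ ν)
    (fun t => (r1 ν t).differentiableAt) (fun t => (r2 ν t).differentiableAt) ς
  have hg := fun ν u => aux_gradlog _ (hρd ν) (fun x => hρpos x ν) (φc ς) u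
  have l1 := fun ν => (hl ν).1
  have l2 := fun ν => (hl ν).2
  have r1' := fun ν => (r1 ν ς).deriv
  have r2' := fun ν => (r2 ν ς).deriv
  have E1 : ∀ u : Fin P,
      (∑ v, gRho γ0 ρ (φc ς) u v * deriv (deriv (fun t => φc t v)) ς) +
      (∑ u', ∑ v', Γrr γ0 ρ (φc ς) u' v' u *
        deriv (fun t => φc t u') ς * deriv (fun t => φc t v') ς) +
      (∑ q', ∑ r', Γppu γ0 ρ ψ (φc ς) (ϕc ς) q' r' u *
        deriv (fun t => ϕc t q') ς * deriv (fun t => ϕc t r') ς) =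
      ∑ ν : B, ((2 * (ρ (φc ς) ν)^2 / γ0 ν) *
          (deriv (deriv (fun t => Real.log (ρ (φc t) ν))) ς +
            (deriv (fun t => Real.log (ρ (φc t) ν)) ς)^2 -
            (deriv (fun t => ψ (ϕc t) ν) ς)^2)) *
          dP (fun φ' => Real.log (ρ φ' ν)) (φc ς) u := by
    intro u
    have key : ∀ ν : B, ((2 * (ρ (φc ς) ν)^2 / γ0 ν) *
          (deriv (deriv (fun t => Real.log (ρ (φc t) ν))) ς +
            (deriv (fun t => Real.log (ρ (φc t) ν)) ς)^2 -
            (deriv (fun t => ψ (ϕc t) ν) ς)^2)) *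
          dP (fun φ' => Real.log (ρ φ' ν)) (φc ς) u =
        (∑ v, (2 / γ0 ν) * Drho ρ (φc ς) ν u * Drho ρ (φc ς) ν v *
          deriv (deriv (fun t => φc t v)) ς) +
        (∑ u', ∑ v', (2 / γ0 ν) * Drho ρ (φc ς) ν u * D2rho ρ (φc ς) ν u' v' *
          deriv (fun t => φc t u') ς * deriv (fun t => φc t v') ς) -
        (∑ q', ∑ r', (2 / γ0 ν) * ρ (φc ς) ν * Drho ρ (φc ς) ν u * Dpsi ψ (ϕc ς) ν q' *
          Dpsi ψ (ϕc ς) ν r' *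
          deriv (fun t => ϕc t q') ς * deriv (fun t => ϕc t r') ς) := by
      intro ν
      have hr := (hρpos (φc ς) ν).ne'
      have hγ := (hγ0 ν).ne'
      have a1 : (∑ v, (2 / γ0 ν) * Drho ρ (φc ς) ν u * Drho ρ (φc ς) ν v *
          deriv (deriv (fun t => φc t v)) ς) +
        (∑ u', ∑ v', (2 / γ0 ν) * Drho ρ (φc ς) ν u * D2rho ρ (φc ς) ν u' v' *
          deriv (fun t => φc t u') ς * deriv (fun t => φc t v') ς) =
          (2 / γ0 ν) * Drho ρ (φc ς) ν u * deriv (deriv (fun t => ρ (φc t) ν)) ς := by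
        rw [r2' ν, mul_add, Finset.mul_sum, Finset.mul_sum]
        simp only [Finset.mul_sum, Drho, D2rho, mul_assoc]
      have a2 : (∑ q', ∑ r', (2 / γ0 ν) * ρ (φc ς) ν * Drho ρ (φc ς) ν u *
          Dpsi ψ (ϕc ς) ν q' * Dpsi ψ (ϕc ς) ν r' *
          deriv (fun t => ϕc t q') ς * deriv (fun t => ϕc t r') ς) =
          (2 / γ0 ν) * ρ (φc ς) ν * Drho ρ (φc ς) ν u *
            (deriv (fun t => ψ (ϕc t) ν) ς)^2 := by
        rw [p1 ν, sq, Finset.sum_mul_sum, Finset.mul_sum]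
        simp only [Finset.mul_sum, Dpsi]
        refine Finset.sum_congr rfl fun i _ => Finset.sum_congr rfl fun j _ => ?_
        ring
      rw [a1, a2, hg, l1, l2, Drho]
      field_simp
      ring
    simp only [key, Finset.sum_add_distrib, Finset.sum_sub_distrib]
    rw [sub_eq_add_neg]
    congr 1
    · congr 1
      · simp only [gRho, Finset.sum_mul]
        exact Finset.sum_comm
      · simp only [Γrr, Finset.sum_mul]
        exact aux_swap _
    · simp only [Γppu, neg_mul, Finset.sum_mul, Finset.sum_neg_distrib]
      exact congrArg Neg.neg (aux_swap _)
  have E2 : ∀ q : Fin Q,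
      (∑ r, gPsi γ0 ρ ψ (φc ς) (ϕc ς) q r * deriv (deriv (fun t => ϕc t r)) ς) +
      (∑ q', ∑ r', Γppq γ0 ρ ψ (φc ς) (ϕc ς) q' r' q *
        deriv (fun t => ϕc t q') ς * deriv (fun t => ϕc t r') ς) +
      2 * (∑ q', ∑ u', Γpuq γ0 ρ ψ (φc ς) (ϕc ς) q' u' q *
        deriv (fun t => ϕc t q') ς * deriv (fun t => φc t u') ς) =
      ∑ ν : B, ((2 * (ρ (φc ς) ν)^2 / γ0 ν) *
          (deriv (deriv (fun t => ψ (ϕc t) ν)) ς +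
            2 * deriv (fun t => Real.log (ρ (φc t) ν)) ς *
              deriv (fun t => ψ (ϕc t) ν) ς)) * Dpsi ψ (ϕc ς) ν q := by
    intro q
    have key : ∀ ν : B, ((2 * (ρ (φc ς) ν)^2 / γ0 ν) *
          (deriv (deriv (fun t => ψ (ϕc t) ν)) ς +
            2 * deriv (fun t => Real.log (ρ (φc t) ν)) ς *
              deriv (fun t => ψ (ϕc t) ν) ς)) * Dpsi ψ (ϕc ς) ν q =
        (∑ r, (2 / γ0 ν) * (ρ (φc ς) ν)^2 * Dpsi ψ (ϕc ς) ν q * Dpsi ψ (ϕc ς) ν r *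
          deriv (deriv (fun t => ϕc t r)) ς) +
        (∑ q', ∑ r', (2 / γ0 ν) * (ρ (φc ς) ν)^2 * Dpsi ψ (ϕc ς) ν q *
          D2psi ψ (ϕc ς) ν q' r' *
          deriv (fun t => ϕc t q') ς * deriv (fun t => ϕc t r') ς) +
        2 * (∑ q', ∑ u', (2 / γ0 ν) * ρ (φc ς) ν * Drho ρ (φc ς) ν u' * Dpsi ψ (ϕc ς) ν q *
          Dpsi ψ (ϕc ς) ν q' *
          deriv (fun t => ϕc t q') ς * deriv (fun t => φc t u') ς) := by
      intro ν
      have hr := (hρpos (φc ς) ν).ne'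
      have hγ := (hγ0 ν).ne'
      have a1 : (∑ r, (2 / γ0 ν) * (ρ (φc ς) ν)^2 * Dpsi ψ (ϕc ς) ν q * Dpsi ψ (ϕc ς) ν r *
          deriv (deriv (fun t => ϕc t r)) ς) +
        (∑ q', ∑ r', (2 / γ0 ν) * (ρ (φc ς) ν)^2 * Dpsi ψ (ϕc ς) ν q *
          D2psi ψ (ϕc ς) ν q' r' *
          deriv (fun t => ϕc t q') ς * deriv (fun t => ϕc t r') ς) =
          (2 / γ0 ν) * (ρ (φc ς) ν)^2 * Dpsi ψ (ϕc ς) ν q *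
            deriv (deriv (fun t => ψ (ϕc t) ν)) ς := by
        rw [p2 ν, mul_add, Finset.mul_sum, Finset.mul_sum]
        simp only [Finset.mul_sum, Dpsi, D2psi, mul_assoc]
      have a2 : (∑ q', ∑ u', (2 / γ0 ν) * ρ (φc ς) ν * Drho ρ (φc ς) ν u' *
          Dpsi ψ (ϕc ς) ν q * Dpsi ψ (ϕc ς) ν q' *
          deriv (fun t => ϕc t q') ς * deriv (fun t => φc t u') ς) =
          (2 / γ0 ν) * ρ (φc ς) ν * Dpsi ψ (ϕc ς) ν q *
            (deriv (fun t => ψ (ϕc t) ν) ς * deriv (fun t => ρ (φc t) ν) ς) := by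
        rw [p1 ν, r1' ν, Finset.sum_mul_sum, Finset.mul_sum]
        simp only [Finset.mul_sum, Dpsi, Drho]
        refine Finset.sum_congr rfl fun i _ => Finset.sum_congr rfl fun j _ => ?_
        ring
      rw [a1, a2, l1]
      field_simp
    simp only [key, Finset.sum_add_distrib, ← Finset.mul_sum]
    congr 1
    · congr 1
      · simp only [gPsi, Finset.sum_mul]
        exact Finset.sum_comm
      · simp only [Γppq, Finset.sum_mul]
        exact aux_swap _
    · congr 1
      simp only [Γpuq, Finset.sum_mul]
      exact aux_swap _
  unfold GeodesicSystem
  simp only [E1, E2]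
  refine and_congr ?_ ?_
  · rw [funext_iff]
    simp only [Sum.forall, Finset.sum_apply, Pi.smul_apply, smul_eq_mul, gradLnRho,
      Sum.elim_inl, Sum.elim_inr, mul_zero, Finset.sum_const_zero, Pi.zero_apply,
      implies_true, and_true]
  · rw [funext_iff]
    simp only [Sum.forall, Finset.sum_apply, Pi.smul_apply, smul_eq_mul, gradPsi,
      Sum.elim_inl, Sum.elim_inr, mul_zero, Finset.sum_const_zero, Pi.zero_apply,
      implies_true, true_and]
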